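/- arXiv:quant-ph/0209058 — 2 statements merged into one kernel-verified Lean document; each statement's English description precedes it below -/
import Mathlib

section
/- The four generators g₁ = X⊗Z⊗Z⊗X⊗I, g₂ = I⊗X⊗Z⊗Z⊗X, g₃ = X⊗I⊗X⊗Z⊗Z, g₄ = Z⊗X⊗I⊗X⊗Z of G⁵ pairwise commute, the subgroup S₅ they generate has order 16, and −I ∉ S₅. -/
/-!
Up to a phase, Pauli words multiply letter by letter: identifying `I, X, Y, Z` with `0, 1, 2, 3`, the
letter of a product is the bitwise XOR of the letters, and its phase is a power of `i`. The pairs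
(word, exponent of `i` modulo 4) therefore carry a computable multiplication `symMul`, and
`symEval` (sending a pair to its matrix) is multiplicative (`symEval_mul`).

It is also injective (`symEval_injective`): every word squares to the identity, and the trace of a
word vanishes unless the word is trivial, so distinct words are not proportional.

The closure of the generators is thus the image of the finite set `stabSym` of symbolic products
`g₁^b₁ g₂^b₂ g₃^b₃ g₄^b₄` with `bᵢ ∈ {0, 1}`. That this set has 16 elements, is stable under
multiplication by the generators and omits the symbol of `-I` are finite computations with symbols.
-/

open Matrix Kronecker
open scoped Classical

noncomputable section

/-- The four single-qubit Pauli matrices `I, X, Y, Z` (indexed `0,1,2,3`). -/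
def PauliMat : Fin 4 → Matrix (Fin 2) (Fin 2) ℂ
  | 0 => 1
  | 1 => !![0, 1; 1, 0]
  | 2 => !![0, -Complex.I; Complex.I, 0]
  | 3 => !![1, 0; 0, -1]

/-- The allowed phases `{1, -1, i, -i}`. -/
def PauliPhase : Set ℂ := {1, -1, Complex.I, -Complex.I}

/-- The `n`-fold Kronecker product `P₁ ⊗ ⋯ ⊗ Pₙ` of single-qubit Pauli matrices
(qubit 1 leftmost). -/
def pauliWord : (n : ℕ) → (Fin n → Fin 4) → Matrix (Fin (2 ^ n)) (Fin (2 ^ n)) ℂ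
  | 0, _ => 1
  | n + 1, P =>
      Matrix.reindex (finProdFinEquiv.trans (finCongr (by ring)))
        (finProdFinEquiv.trans (finCongr (by ring)))
        (Matrix.kroneckerMap (· * ·) (PauliMat (P 0)) (pauliWord n (fun j => P j.succ)))

/-- The `n`-qubit Pauli group `Gⁿ`, as a set of `2ⁿ × 2ⁿ` complex matrices. -/
def PauliGroup (n : ℕ) : Set (Matrix (Fin (2 ^ n)) (Fin (2 ^ n)) ℂ) :=
  {A | ∃ c ∈ PauliPhase, ∃ P : Fin n → Fin 4, A = c • pauliWord n P}

/-- The syndrome of `g` with respect to generators `gs`: the `i`-th component is `0`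
if `g` commutes with `gs i` and `1` otherwise (for Pauli elements, "otherwise" means
anticommutes). -/
def syndrome {n r : ℕ} (gs : Fin r → Matrix (Fin (2 ^ n)) (Fin (2 ^ n)) ℂ)
    (g : Matrix (Fin (2 ^ n)) (Fin (2 ^ n)) ℂ) : Fin r → ZMod 2 :=
  fun i => if g * gs i = gs i * g then 0 else 1


/-- The four generators of the five-qubit code stabilizer:
g₁ = XZZXI, g₂ = IXZZX, g₃ = XIXZZ, g₄ = ZXIXZ. -/
def fiveGens : Fin 4 → Matrix (Fin (2 ^ 5)) (Fin (2 ^ 5)) ℂ :=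
  ![pauliWord 5 ![1, 3, 3, 1, 0], pauliWord 5 ![0, 1, 3, 3, 1],
    pauliWord 5 ![1, 0, 1, 3, 3], pauliWord 5 ![3, 1, 0, 1, 3]]

/-- Exponent of `i` in the product of two single-qubit Pauli matrices
(`XY = iZ` and cyclically, with the opposite sign in the other order). -/
def letterPhase (a b : Fin 4) : ZMod 4 :=
  if (a, b) ∈ [((1 : Fin 4), (2 : Fin 4)), (2, 3), (3, 1)] then 1
  else if (a, b) ∈ [((2 : Fin 4), (1 : Fin 4)), (3, 2), (1, 3)] then 3 else 0

/-- The power `i ^ k`, with the exponent taken modulo 4. -/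
def iPow (k : ZMod 4) : ℂ := Complex.I ^ k.val

lemma iPow_add (k l : ZMod 4) : iPow (k + l) = iPow k * iPow l := by
  rw [iPow, iPow, iPow, ZMod.val_add, ← pow_add, ← Complex.I_pow_eq_pow_mod]

lemma iPow_zero : iPow 0 = 1 := by simp [iPow]

lemma iPow_ne_zero (k : ZMod 4) : iPow k ≠ 0 := pow_ne_zero _ Complex.I_ne_zero

lemma iPow_injective : Function.Injective iPow := by
  have key : ∀ k : ZMod 4, iPow k = 1 → k = 0 := by
    intro k hk
    obtain rfl | rfl | rfl | rfl : k = 0 ∨ k = 1 ∨ k = 2 ∨ k = 3 := by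
      clear hk; revert k; decide
    · rfl
    · exact absurd (congrArg Complex.re hk) (by simp [iPow, show (1 : ZMod 4).val = 1 from rfl])
    · exact absurd (congrArg Complex.re hk)
        (by norm_num [iPow, show (2 : ZMod 4).val = 2 from rfl])
    · exact absurd (congrArg Complex.re hk)
        (by norm_num [iPow, show (3 : ZMod 4).val = 3 from rfl, pow_succ])
  intro k l h
  have h1 : iPow (k - l) * iPow l = 1 * iPow l := by
    rw [← iPow_add, sub_add_cancel, h, one_mul]
  exact sub_eq_zero.mp (key _ (mul_right_cancel₀ (iPow_ne_zero l) h1))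

lemma pauliMat_mul (a b : Fin 4) :
    PauliMat a * PauliMat b = iPow (letterPhase a b) • PauliMat (a ^^^ b) := by
  have h3 : Complex.I ^ 3 = -Complex.I := by simp [pow_succ]
  fin_cases a <;> fin_cases b <;> ext i j <;> fin_cases i <;> fin_cases j <;>
    simp [PauliMat, iPow, letterPhase, Matrix.mul_apply, show (1 : ZMod 4).val = 1 from rfl,
      show (3 : ZMod 4).val = 3 from rfl, h3,
      show (1 : Fin 4) ^^^ 2 = 3 from rfl, show (2 : Fin 4) ^^^ 1 = 3 from rfl,
      show (1 : Fin 4) ^^^ 3 = 2 from rfl, show (3 : Fin 4) ^^^ 1 = 2 from rfl,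
      show (2 : Fin 4) ^^^ 3 = 1 from rfl, show (3 : Fin 4) ^^^ 2 = 1 from rfl]

lemma pauliMat_trace {a : Fin 4} (ha : a ≠ 0) : (PauliMat a).trace = 0 := by
  fin_cases a <;> simp_all [PauliMat, Matrix.trace]

lemma pauliWord_mul (n : ℕ) (P Q : Fin n → Fin 4) :
    pauliWord n P * pauliWord n Q =
      iPow (∑ j, letterPhase (P j) (Q j)) • pauliWord n (fun j => P j ^^^ Q j) := by
  induction n with
  | zero => simp [pauliWord, iPow_zero]
  | succ n ih =>
    simp only [pauliWord, Matrix.reindex_apply, Matrix.submatrix_mul_equiv]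
    rw [← Matrix.mul_kronecker_mul, pauliMat_mul, ih, Matrix.smul_kronecker,
      Matrix.kronecker_smul, smul_smul, ← iPow_add, ← Fin.sum_univ_succ
        (fun j => letterPhase (P j) (Q j))]
    rfl

lemma pauliWord_zero (n : ℕ) : pauliWord n (fun _ => 0) = 1 := by
  induction n with
  | zero => rfl
  | succ n ih =>
    rw [pauliWord, ih, PauliMat, Matrix.reindex_apply]
    erw [Matrix.one_kronecker_one]
    exact Matrix.submatrix_one_equiv _

lemma pauliWord_trace (n : ℕ) (P : Fin n → Fin 4) (hP : ∃ j, P j ≠ 0) :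
    (pauliWord n P).trace = 0 := by
  induction n with
  | zero => exact hP.elim fun j => j.elim0
  | succ n ih =>
    have hprod : (pauliWord (n + 1) P).trace =
        (PauliMat (P 0)).trace * (pauliWord n (fun j => P j.succ)).trace := by
      rw [← Matrix.trace_kronecker, pauliWord, Matrix.reindex_apply]
      exact Equiv.sum_comp _ fun x => Matrix.kroneckerMap (· * ·) (PauliMat (P 0))
        (pauliWord n (fun j => P j.succ)) x x
    rw [hprod]
    by_cases h0 : P 0 = 0
    · obtain ⟨j, hj⟩ := hP
      cases j using Fin.cases with
      | zero => exact absurd h0 hj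
      | succ j => rw [ih _ ⟨j, hj⟩, mul_zero]
    · rw [pauliMat_trace h0, zero_mul]

lemma pauliWord_mul_self (n : ℕ) (P : Fin n → Fin 4) : pauliWord n P * pauliWord n P = 1 := by
  have hphase : ∀ a, letterPhase a a = 0 := by decide
  have hxor : ∀ a : Fin 4, a ^^^ a = 0 := by decide
  simp only [pauliWord_mul, hphase, hxor, Finset.sum_const_zero, iPow_zero, one_smul,
    pauliWord_zero]

/-- Symbols for five-qubit Pauli operators: a word and an exponent of `i` modulo 4. -/
abbrev PauliSym : Type := (Fin 5 → Fin 4) × ZMod 4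

/-- The matrix of a symbol `(P, k)`, namely `i ^ k` times the Pauli word `P`. -/
def symEval (x : PauliSym) : Matrix (Fin (2 ^ 5)) (Fin (2 ^ 5)) ℂ :=
  iPow x.2 • pauliWord 5 x.1

/-- Multiplication of symbols. -/
def symMul (x y : PauliSym) : PauliSym :=
  (fun j => x.1 j ^^^ y.1 j, x.2 + y.2 + ∑ j, letterPhase (x.1 j) (y.1 j))

/-- The symbol of the identity. -/
def symOne : PauliSym := (fun _ => 0, 0)

lemma symEval_mul (x y : PauliSym) : symEval (symMul x y) = symEval x * symEval y := by
  simp only [symEval, symMul, Matrix.smul_mul, Matrix.mul_smul, pauliWord_mul, smul_smul, iPow_add]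
  ring_nf

lemma symEval_one : symEval symOne = 1 := by
  simp only [symEval, symOne, pauliWord_zero, iPow_zero, one_smul]

lemma symEval_injective : Function.Injective symEval := by
  rintro ⟨P, k⟩ ⟨Q, l⟩ h
  simp only [symEval] at h
  -- Multiplying by the word `Q` makes the right side scalar, so that traces separate the words.
  have h' := congrArg (fun A => (A * pauliWord 5 Q).trace) h
  simp only [Matrix.smul_mul, pauliWord_mul_self, Matrix.trace_smul, Matrix.trace_one] at h'
  have hPQ : P = Q := by
    by_contra hne
    obtain ⟨j, hj⟩ := Function.ne_iff.mp hne
    have hxor : ∀ a b : Fin 4, a ^^^ b = 0 → a = b := by decide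
    rw [pauliWord_mul, Matrix.trace_smul,
      pauliWord_trace 5 _ ⟨j, fun h0 => hj (hxor _ _ h0)⟩] at h'
    simp [iPow_ne_zero] at h'
  subst hPQ
  simp only [pauliWord_mul_self, Matrix.trace_one] at h'
  have hkl : iPow k = iPow l := by simpa using h'
  rw [iPow_injective hkl]

/-- The symbols of the four generators. -/
def genSym : Fin 4 → PauliSym :=
  ![(![1, 3, 3, 1, 0], 0), (![0, 1, 3, 3, 1], 0), (![1, 0, 1, 3, 3], 0), (![3, 1, 0, 1, 3], 0)]

lemma symEval_genSym (i : Fin 4) : symEval (genSym i) = fiveGens i := by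
  fin_cases i <;> simp [symEval, genSym, fiveGens, iPow_zero]

/-- The symbol of `g₁^b₁ g₂^b₂ g₃^b₃ g₄^b₄`. -/
def prodSym (b : Bool × Bool × Bool × Bool) : PauliSym :=
  symMul (if b.1 then genSym 0 else symOne) <|
  symMul (if b.2.1 then genSym 1 else symOne) <|
  symMul (if b.2.2.1 then genSym 2 else symOne) <| if b.2.2.2 then genSym 3 else symOne

/-- The symbols of the 16 elements of the stabilizer. -/
def stabSym : Finset PauliSym := Finset.univ.image prodSym

lemma genSym_comm : ∀ i j, symMul (genSym i) (genSym j) = symMul (genSym j) (genSym i) := by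
  decide +kernel

lemma stabSym_card : stabSym.card = 16 := by
  rw [stabSym, Finset.card_image_of_injective]
  · rfl
  · unfold Function.Injective
    decide +kernel

lemma exists_prodSym_mul : ∀ i b, ∃ b', prodSym b' = symMul (genSym i) (prodSym b) := by
  decide +kernel

lemma prodSym_ne_neg_one : ∀ b, prodSym b ≠ (fun _ => 0, 2) := by
  decide +kernel

lemma symEval_prodSym_mem (b : Bool × Bool × Bool × Bool) :
    symEval (prodSym b) ∈ Submonoid.closure (Set.range fiveGens) := by
  have h : ∀ (c : Bool) (i : Fin 4),
      symEval (if c then genSym i else symOne) ∈ Submonoid.closure (Set.range fiveGens) := by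
    intro c i
    cases c
    · simp [symEval_one]
    · simpa [symEval_genSym] using Submonoid.subset_closure (Set.mem_range_self i)
  simp only [prodSym, symEval_mul]
  exact mul_mem (h _ _) (mul_mem (h _ _) (mul_mem (h _ _) (h _ _)))

lemma closure_eq_image :
    (Submonoid.closure (Set.range fiveGens) : Set (Matrix (Fin (2 ^ 5)) (Fin (2 ^ 5)) ℂ)) =
      symEval '' stabSym := by
  apply Set.Subset.antisymm
  · intro A hA
    induction hA using Submonoid.closure_induction_left with
    | one =>
      refine ⟨prodSym (false, false, false, false), by simp [stabSym], ?_⟩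
      simp [prodSym, symEval_mul, symEval_one]
    | mul_left A hA B hB ih =>
      obtain ⟨i, rfl⟩ := hA
      obtain ⟨x, hx, rfl⟩ := ih
      obtain ⟨b, -, rfl⟩ := Finset.mem_image.mp (Finset.mem_coe.mp hx)
      obtain ⟨b', hb'⟩ := exists_prodSym_mul i b
      refine ⟨prodSym b', by simp [stabSym], ?_⟩
      rw [hb', symEval_mul, symEval_genSym]
  · rintro _ ⟨x, hx, rfl⟩
    obtain ⟨b, -, rfl⟩ := Finset.mem_image.mp (Finset.mem_coe.mp hx)
    exact symEval_prodSym_mem b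

/-- the generators of the five-qubit code pairwise commute, generate a
subgroup of order 16, and -I is not in that subgroup. -/
theorem fiveQubit_stabilizer_facts :
    (∀ i j, fiveGens i * fiveGens j = fiveGens j * fiveGens i) ∧
    (Submonoid.closure (Set.range fiveGens) : Set (Matrix (Fin (2 ^ 5)) (Fin (2 ^ 5)) ℂ)).ncard = 16 ∧
    (-1 : Matrix (Fin (2 ^ 5)) (Fin (2 ^ 5)) ℂ) ∉ Submonoid.closure (Set.range fiveGens) := by
  refine ⟨fun i j => ?_, ?_, fun h => ?_⟩
  · rw [← symEval_genSym, ← symEval_genSym, ← symEval_mul, ← symEval_mul, genSym_comm]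
  · rw [closure_eq_image, Set.ncard_image_of_injective _ symEval_injective,
      Set.ncard_coe_finset, stabSym_card]
  · rw [← SetLike.mem_coe, closure_eq_image] at h
    obtain ⟨x, hx, hxe⟩ := h
    obtain ⟨b, -, rfl⟩ := Finset.mem_image.mp (Finset.mem_coe.mp hx)
    have hneg : symEval (fun _ => 0, 2) = -1 := by
      simp [symEval, pauliWord_zero, iPow, show (2 : ZMod 4).val = 2 from rfl]
    exact prodSym_ne_neg_one b (symEval_injective (hxe.trans hneg.symm))

end
end

section
/- For every two-element subset {j,k} ⊆ {1,…,5}, exactly 7 of the 16 Pauli words g on 5 qubits supported in {j,k} satisfy: c·φ₅(ε(g))·g ∈ S₅ for some c ∈ {1, −1, i, −i}. (This is the statement f_{S₅}(2) = 7/16: the five-qubit code corrects an arbitrary two-qubit error with probability 7/16.) -/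
/-!
Two Pauli words commute up to a sign, which is the product of the letterwise signs, so syndromes
can be computed letter by letter (`syndrome_fiveGens`).

If the error-correcting function returns `g` itself on the syndrome of `g`, then `φ₅(ε(g)) g = 1`
lies in the stabilizer. Conversely, every element of the stabilizer commutes with the logical
operators `XXXXX` and `ZZZZZ`, since the generators do. For `g` of weight at most two,
`φ₅(ε(g)) g` has trivial syndrome and weight at most three; the code has distance three and its
nontrivial stabilizer elements have weight four, so if moreover `φ₅(ε(g)) g` commutes with both
logical operators, then it is a scalar and `φ₅(ε(g)) = g`. This last finite step
(`phi5Word_eq_of_commute_logical`) and the count of fixed words, namely the identity and the six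
words of weight one supported in `{j, k}` (`card_fixed`), are evaluated by the kernel.
-/


open Matrix Kronecker
open scoped Classical

noncomputable section

/-- The letters (as elements of Fin 4: 0 = I, 1 = X, 2 = Y, 3 = Z) of the Pauli word
assigned by the error-correcting function of the five-qubit code to a syndrome. -/
def phi5Word (e : Fin 4 → ZMod 2) : Fin 5 → Fin 4 :=
  if e = ![0, 0, 0, 0] then ![0, 0, 0, 0, 0]
  else if e = ![0, 0, 0, 1] then ![1, 0, 0, 0, 0]
  else if e = ![0, 0, 1, 0] then ![0, 0, 3, 0, 0]
  else if e = ![0, 0, 1, 1] then ![0, 0, 0, 0, 1]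
  else if e = ![0, 1, 0, 0] then ![0, 0, 0, 0, 3]
  else if e = ![0, 1, 0, 1] then ![0, 3, 0, 0, 0]
  else if e = ![0, 1, 1, 0] then ![0, 0, 0, 1, 0]
  else if e = ![0, 1, 1, 1] then ![0, 0, 0, 0, 2]
  else if e = ![1, 0, 0, 0] then ![0, 1, 0, 0, 0]
  else if e = ![1, 0, 0, 1] then ![0, 0, 0, 3, 0]
  else if e = ![1, 0, 1, 0] then ![3, 0, 0, 0, 0]
  else if e = ![1, 0, 1, 1] then ![2, 0, 0, 0, 0]
  else if e = ![1, 1, 0, 0] then ![0, 0, 1, 0, 0]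
  else if e = ![1, 1, 0, 1] then ![0, 2, 0, 0, 0]
  else if e = ![1, 1, 1, 0] then ![0, 0, 2, 0, 0]
  else ![0, 0, 0, 2, 0]

/-- The error-correcting function of the five-qubit code. -/
def phi5 (e : Fin 4 → ZMod 2) : Matrix (Fin (2 ^ 5)) (Fin (2 ^ 5)) ℂ :=
  pauliWord 5 (phi5Word e)

/-- The sign `±1` by which two single-qubit Pauli letters commute. -/
def letterSign (a b : Fin 4) : ℤ := if a = 0 ∨ b = 0 ∨ a = b then 1 else -1

/-- The sign by which two Pauli words commute. -/
def wordSign {n : ℕ} (P Q : Fin n → Fin 4) : ℤ := ∏ i, letterSign (P i) (Q i)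

lemma PauliMat_comm (a b : Fin 4) :
    PauliMat a * PauliMat b = (letterSign a b : ℂ) • (PauliMat b * PauliMat a) := by
  fin_cases a <;> fin_cases b <;> ext i j <;> fin_cases i <;> fin_cases j <;>
    simp [PauliMat, letterSign, Matrix.mul_apply]

lemma PauliMat_sq (a : Fin 4) : PauliMat a * PauliMat a = 1 := by
  fin_cases a <;> ext i j <;> fin_cases i <;> fin_cases j <;>
    simp [PauliMat, Matrix.mul_apply]

lemma pauliWord_succ_mul {n : ℕ} (P Q : Fin (n + 1) → Fin 4) :
    pauliWord (n + 1) P * pauliWord (n + 1) Q =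
      Matrix.reindex (finProdFinEquiv.trans (finCongr (by ring)))
        (finProdFinEquiv.trans (finCongr (by ring)))
        (Matrix.kroneckerMap (· * ·) (PauliMat (P 0) * PauliMat (Q 0))
          (pauliWord n (fun j => P j.succ) * pauliWord n (fun j => Q j.succ))) := by
  rw [Matrix.mul_kronecker_mul]
  simp only [pauliWord, Matrix.reindex_apply, Matrix.submatrix_mul_equiv]

lemma pauliWord_comm {n : ℕ} (P Q : Fin n → Fin 4) :
    pauliWord n P * pauliWord n Q = (wordSign P Q : ℂ) • (pauliWord n Q * pauliWord n P) := by
  induction n with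
  | zero => simp [pauliWord, wordSign]
  | succ n ih =>
    rw [pauliWord_succ_mul, pauliWord_succ_mul, PauliMat_comm, ih]
    simp only [wordSign, Fin.prod_univ_succ]
    ext i j
    simp [Matrix.kroneckerMap_apply]
    ring

lemma pauliWord_sq {n : ℕ} (P : Fin n → Fin 4) : pauliWord n P * pauliWord n P = 1 := by
  induction n with
  | zero => simp [pauliWord]
  | succ n ih =>
    rw [pauliWord_succ_mul, PauliMat_sq, ih, Matrix.one_kronecker_one, Matrix.reindex_apply,
      Matrix.submatrix_one_equiv]

lemma smul_pauliWord_mul_cancel {n : ℕ} {a b : ℂ} (P Q : Fin n → Fin 4)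
    (h : a • (pauliWord n P * pauliWord n Q) = b • (pauliWord n P * pauliWord n Q)) : a = b := by
  have hinv : pauliWord n P * pauliWord n Q * (pauliWord n Q * pauliWord n P) = 1 := by
    rw [Matrix.mul_assoc, ← Matrix.mul_assoc (pauliWord n Q), pauliWord_sq, Matrix.one_mul,
      pauliWord_sq]
  have h2 := congrArg (· * (pauliWord n Q * pauliWord n P)) h
  simp only [Matrix.smul_mul, hinv] at h2
  have : NeZero (2 ^ n) := ⟨by positivity⟩
  simpa using congrFun (congrFun h2 0) 0

lemma pauliWord_commute_iff {n : ℕ} (P Q : Fin n → Fin 4) :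
    pauliWord n P * pauliWord n Q = pauliWord n Q * pauliWord n P ↔ wordSign P Q = 1 := by
  constructor
  · intro h
    rw [pauliWord_comm] at h
    have := smul_pauliWord_mul_cancel (b := 1) Q P (by rw [h, one_smul])
    exact_mod_cast this
  · intro h
    rw [pauliWord_comm, h, Int.cast_one, one_smul]

/-- The letters of the four stabilizer generators. -/
def genWord : Fin 4 → Fin 5 → Fin 4 :=
  ![![1, 3, 3, 1, 0], ![0, 1, 3, 3, 1], ![1, 0, 1, 3, 3], ![3, 1, 0, 1, 3]]

lemma fiveGens_eq (i : Fin 4) : fiveGens i = pauliWord 5 (genWord i) := by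
  fin_cases i <;> rfl

/-- The syndrome of a Pauli word, computed from its letters. -/
def wordSyndrome (P : Fin 5 → Fin 4) : Fin 4 → ZMod 2 :=
  fun i => if wordSign P (genWord i) = 1 then 0 else 1

lemma syndrome_fiveGens (P : Fin 5 → Fin 4) :
    syndrome fiveGens (pauliWord 5 P) = wordSyndrome P := by
  funext i
  simp only [syndrome, wordSyndrome, fiveGens_eq, pauliWord_commute_iff]

lemma wordSign_genWord_const :
    ∀ i : Fin 4, ∀ a : Fin 4, wordSign (genWord i) (fun _ => a) = 1 := by
  decide +kernel

/-- Stabilizer elements commute with the logical operators `P ⊗ P ⊗ P ⊗ P ⊗ P`. -/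
lemma commute_const_of_mem_closure {A : Matrix (Fin (2 ^ 5)) (Fin (2 ^ 5)) ℂ}
    (hA : A ∈ Submonoid.closure (Set.range fiveGens)) (a : Fin 4) :
    A * pauliWord 5 (fun _ => a) = pauliWord 5 (fun _ => a) * A := by
  have hle : Submonoid.closure (Set.range fiveGens) ≤
      Submonoid.centralizer {pauliWord 5 (fun _ => a)} := by
    rw [Submonoid.closure_le]
    rintro _ ⟨i, rfl⟩
    rw [SetLike.mem_coe, Submonoid.mem_centralizer_iff]
    rintro _ rfl
    rw [fiveGens_eq]
    exact ((pauliWord_commute_iff _ _).2 (wordSign_genWord_const i a)).symm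
  exact (Submonoid.mem_centralizer_iff.1 (hle hA) _ rfl).symm

lemma wordSign_mul_eq_one {n : ℕ} {c : ℂ} (hc : c ≠ 0) (P Q L : Fin n → Fin 4)
    (h : (c • (pauliWord n P * pauliWord n Q)) * pauliWord n L =
      pauliWord n L * (c • (pauliWord n P * pauliWord n Q))) :
    wordSign P L * wordSign Q L = 1 := by
  have hswap : pauliWord n P * pauliWord n Q * pauliWord n L =
      ((wordSign P L * wordSign Q L : ℤ) : ℂ) •
        (pauliWord n L * (pauliWord n P * pauliWord n Q)) := by
    rw [Matrix.mul_assoc, pauliWord_comm Q L, Matrix.mul_smul, ← Matrix.mul_assoc,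
      pauliWord_comm P L, Matrix.smul_mul, smul_smul, Matrix.mul_assoc]
    congr 1
    push_cast
    ring
  rw [Matrix.smul_mul, Matrix.mul_smul, hswap] at h
  have h1 := smul_right_injective _ hc h
  have h2 := congrArg (pauliWord n L * ·) h1
  simp only [Matrix.mul_smul, ← Matrix.mul_assoc, pauliWord_sq, Matrix.one_mul] at h2
  have := smul_pauliWord_mul_cancel (b := 1) P Q (by rw [h2, one_smul])
  exact_mod_cast this

/-- On words of weight at most two, if `φ₅(ε(g)) g` commutes with `XXXXX` and `ZZZZZ`, then
`φ₅(ε(g)) = g`. -/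
lemma phi5Word_eq_of_commute_logical : ∀ j k : Fin 5, ∀ P : Fin 5 → Fin 4,
    (∀ i, i ≠ j → i ≠ k → P i = 0) →
    wordSign (phi5Word (wordSyndrome P)) (fun _ => 1) * wordSign P (fun _ => 1) = 1 →
    wordSign (phi5Word (wordSyndrome P)) (fun _ => 3) * wordSign P (fun _ => 3) = 1 →
    phi5Word (wordSyndrome P) = P := by
  decide +kernel

lemma card_fixed : ∀ j k : Fin 5, j ≠ k →
    (Finset.univ.filter (fun P : Fin 5 → Fin 4 =>
      (∀ i, i ≠ j → i ≠ k → P i = 0) ∧ phi5Word (wordSyndrome P) = P)).card = 7 := by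
  decide +kernel

lemma ne_zero_of_mem_PauliPhase {c : ℂ} (hc : c ∈ PauliPhase) : c ≠ 0 := by
  rcases hc with rfl | rfl | rfl | rfl <;> simp

/-- f_{S₅}(2) = 7/16: for each two-element subset {j,k} of the qubits,
exactly 7 of the 16 Pauli words supported in {j,k} are corrected by φ₅ (up to a
phase c ∈ {1,-1,i,-i}). -/
theorem fiveQubit_two_qubit_count (j k : Fin 5) (hjk : j ≠ k) :
    (Finset.univ.filter (fun P : Fin 5 → Fin 4 =>
      (∀ i, i ≠ j → i ≠ k → P i = 0) ∧
      ∃ c ∈ PauliPhase,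
        c • (phi5 (syndrome fiveGens (pauliWord 5 P)) * pauliWord 5 P) ∈
          Submonoid.closure (Set.range fiveGens))).card = 7 := by
  rw [← card_fixed j k hjk]
  congr 1
  ext P
  simp only [Finset.mem_filter, Finset.mem_univ, true_and, and_congr_right_iff, phi5,
    syndrome_fiveGens]
  intro hP
  constructor
  · rintro ⟨c, hc, hmem⟩
    have hsign (a : Fin 4) := wordSign_mul_eq_one (ne_zero_of_mem_PauliPhase hc) _ _ _
      (commute_const_of_mem_closure hmem a)
    exact phi5Word_eq_of_commute_logical j k P hP (hsign 1) (hsign 3)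
  · intro h
    refine ⟨1, Or.inl rfl, ?_⟩
    rw [h, pauliWord_sq, one_smul]
    exact one_mem _

end
end
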